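/- arXiv:math/0602108 — 2 statements merged into one kernel-verified Lean document; each statement's English description precedes it below -/
import Mathlib

section
/- Let J be an invertible n×n complex matrix, let g satisfy gᴴ·J·g = J, and let x₁, …, xₖ (k ≥ 1) satisfy xᵢᴴ·J = −J·xᵢ for all i (ᴴ = conjugate transpose). Set M = ½·g·x₁·x₂⋯xₖ + ((−1)^{k+1}/2)·xₖ⋯x₂·x₁·g⁻¹. Then (a) M lies in the Lie algebra 𝔤_J, i.e. Mᴴ·J = −J·M, and (b) for every y with yᴴ·J = −J·y one has Re tr(M·y) = Re tr(g·x₁⋯xₖ·y). Thus M represents, with respect to the form ⟨x,y⟩ = Re tr(xy) on 𝔤_J, the extended variation function F̂(g; [x₁⊗⋯⊗xₖ]) = ½·g·x₁⋯xₖ + ((−1)^{k+1}/2)·xₖ⋯x₁·g⁻¹ for the groups O(p,q), O(n,ℂ), U(p,q), Sp(n,ℝ), Sp(p,q). -/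
/-!
The map `A ↦ A⋆ := J⁻¹ * Aᴴ * J` reverses products, sends each `xᵢ` to `-xᵢ` and sends `g` to `g⁻¹`.
With `A = g x₁⋯xₖ` and `B = xₖ⋯x₁ g⁻¹` this gives `A⋆ = (-1)^k B` and `B⋆ = (-1)^k A`
(`J` need not be Hermitian, so the second identity is proved separately), and
`M = ½ (A - A⋆)`.  Membership in the Lie algebra is then immediate.  For the trace identity,
`y⋆ = -y` and cyclicity of the trace give `tr (A⋆ y) = -conj (tr (A y))`
(`trace_mul_eq_neg_star`), so `M` and `A` have the same real trace pairing with `y`.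

Relations `A⋆ = C` are written below in the inverse-free form `Aᴴ * J = J * C`.
-/

open Matrix

/-- The `J`-adjoint of a product of Lie algebra elements is, up to the sign `(-1)^length`, the product
in reverse order. -/
theorem conjTranspose_list_prod_mul {n : ℕ} (J : Matrix (Fin n) (Fin n) ℂ)
    (l : List (Matrix (Fin n) (Fin n) ℂ)) (hl : ∀ a ∈ l, aᴴ * J = -(J * a)) :
    l.prodᴴ * J = (-1 : ℂ) ^ l.length • (J * l.reverse.prod) := by
  induction l with
  | nil => simp
  | cons a l ih =>
    have ha := hl a (by simp)
    have ih' := ih fun b hb => hl b (by simp [hb])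
    rw [List.prod_cons, conjTranspose_mul, Matrix.mul_assoc, ha, mul_neg, ← Matrix.mul_assoc, ih']
    simp [pow_succ, Matrix.mul_assoc]

theorem trace_mul_eq_neg_star {n : ℕ} {J A C y : Matrix (Fin n) (Fin n) ℂ} (hJ : IsUnit J)
    (hA : Aᴴ * J = J * C) (hy : yᴴ * J = -(J * y)) :
    (C * y).trace = -star (A * y).trace := by
  have hdet : IsUnit J.det := (Matrix.isUnit_iff_isUnit_det J).1 hJ
  have hC : C = J⁻¹ * (Aᴴ * J) := by rw [hA, Matrix.nonsing_inv_mul_cancel_left _ _ hdet]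
  have hJy : J * y = -(yᴴ * J) := by rw [hy, neg_neg]
  calc (C * y).trace = (J⁻¹ * (Aᴴ * (J * y))).trace := by simp only [hC, Matrix.mul_assoc]
    _ = -(J⁻¹ * (Aᴴ * yᴴ * J)).trace := by
      rw [hJy]; simp only [mul_neg, trace_neg, Matrix.mul_assoc]
    _ = -(Aᴴ * yᴴ).trace := by
      rw [Matrix.trace_mul_comm, Matrix.mul_nonsing_inv_cancel_right _ _ hdet]
    _ = -star (A * y).trace := by
      rw [← conjTranspose_mul, trace_conjTranspose, Matrix.trace_mul_comm]

/-- Let `J` be an invertible complex matrix, `g` satisfy `gᴴ * J * g = J`, and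
`x₁, …, xₖ` (`k ≥ 1`) lie in the Lie algebra `𝔤_J = {x | xᴴ * J = -(J * x)}`.  Then
`M = ½ g x₁⋯xₖ + ((-1)^(k+1)/2) xₖ⋯x₁ g⁻¹` lies in `𝔤_J`, and for every `y ∈ 𝔤_J` one has
`Re tr (M * y) = Re tr (g * x₁⋯xₖ * y)`; i.e. `M` represents the extended variation function
`F̂(g; [x₁⊗⋯⊗xₖ])` with respect to the form `⟨x, y⟩ = Re tr (x * y)` for the groups
`O(p,q)`, `O(n,ℂ)`, `U(p,q)`, `Sp(n,ℝ)`, `Sp(p,q)`. -/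
theorem extended_variation_function_G_J {n k : ℕ} (hk : 1 ≤ k)
    (J g : Matrix (Fin n) (Fin n) ℂ) (x : Fin k → Matrix (Fin n) (Fin n) ℂ)
    (hJ : IsUnit J) (hg : gᴴ * J * g = J) (hx : ∀ i, (x i)ᴴ * J = -(J * x i)) :
    (((1 / 2 : ℂ) • (g * (List.ofFn x).prod) +
        ((-1 : ℂ) ^ (k + 1) / 2) • ((List.ofFn x).reverse.prod * g⁻¹))ᴴ * J =
      -(J * ((1 / 2 : ℂ) • (g * (List.ofFn x).prod) +
        ((-1 : ℂ) ^ (k + 1) / 2) • ((List.ofFn x).reverse.prod * g⁻¹)))) ∧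
    ∀ y : Matrix (Fin n) (Fin n) ℂ, yᴴ * J = -(J * y) →
      Complex.re ((((1 / 2 : ℂ) • (g * (List.ofFn x).prod) +
          ((-1 : ℂ) ^ (k + 1) / 2) • ((List.ofFn x).reverse.prod * g⁻¹)) * y).trace) =
        Complex.re ((g * (List.ofFn x).prod * y).trace) := by
  have hJdet : IsUnit J.det := (Matrix.isUnit_iff_isUnit_det J).1 hJ
  have hgdet : IsUnit g.det := by
    have h := hJdet
    rw [← hg, det_mul] at h
    exact isUnit_of_mul_isUnit_right h
  have hgJ : gᴴ * J = J * g⁻¹ := by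
    rw [← Matrix.mul_nonsing_inv_cancel_right g (gᴴ * J) hgdet, hg]
  have hginv : g⁻¹ᴴ * J = J * g := by
    have h : g⁻¹ᴴ * gᴴ = 1 := by
      rw [← conjTranspose_mul, Matrix.mul_nonsing_inv g hgdet, conjTranspose_one]
    calc g⁻¹ᴴ * J = g⁻¹ᴴ * (gᴴ * J * g) := by rw [hg]
      _ = g⁻¹ᴴ * gᴴ * (J * g) := by simp only [Matrix.mul_assoc]
      _ = J * g := by rw [h, Matrix.one_mul]
  have hl : ∀ a ∈ List.ofFn x, aᴴ * J = -(J * a) := by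
    intro a ha
    obtain ⟨i, rfl⟩ := List.mem_ofFn.1 ha
    exact hx i
  have hX := conjTranspose_list_prod_mul J (List.ofFn x) hl
  have hR := conjTranspose_list_prod_mul J (List.ofFn x).reverse
    fun a ha => hl a (List.mem_reverse.1 ha)
  rw [List.length_reverse, List.reverse_reverse] at hR
  rw [List.length_ofFn] at hX hR
  generalize (List.ofFn x).prod = X at *
  generalize (List.ofFn x).reverse.prod = R at *
  have hA : (g * X)ᴴ * J = J * ((-1 : ℂ) ^ k • (R * g⁻¹)) := by
    rw [conjTranspose_mul, Matrix.mul_assoc, hgJ, ← Matrix.mul_assoc, hX]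
    simp [Matrix.mul_assoc]
  have hB : (R * g⁻¹)ᴴ * J = (-1 : ℂ) ^ k • (J * (g * X)) := by
    rw [conjTranspose_mul, Matrix.mul_assoc, hR, mul_smul_comm, ← Matrix.mul_assoc, hginv,
      Matrix.mul_assoc]
  have hsq : (-1 : ℂ) ^ k * (-1 : ℂ) ^ k = 1 := by rw [← mul_pow]; simp
  refine ⟨?_, fun y hy => ?_⟩
  · have hstar : star ((-1 : ℂ) ^ (k + 1) / 2) = (-1 : ℂ) ^ (k + 1) / 2 := by simp
    have hhalf : star (1 / 2 : ℂ) = 1 / 2 := by simp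
    have hc : (-1 : ℂ) ^ (k + 1) / 2 * (-1 : ℂ) ^ k = -(1 / 2) := by
      rw [pow_succ]; linear_combination (-1 / 2 : ℂ) * hsq
    rw [conjTranspose_add, conjTranspose_smul, conjTranspose_smul, hstar, hhalf, Matrix.add_mul,
      smul_mul_assoc, smul_mul_assoc, hA, hB, smul_smul, hc, Matrix.mul_add, mul_smul_comm,
      mul_smul_comm, mul_smul_comm, smul_smul, pow_succ]
    module
  · have ht := trace_mul_eq_neg_star hJ hA hy
    have hM : (1 / 2 : ℂ) • (g * X) + ((-1 : ℂ) ^ (k + 1) / 2) • (R * g⁻¹) =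
        (1 / 2 : ℝ) • (g * X - (-1 : ℂ) ^ k • (R * g⁻¹)) := by
      rw [← Complex.coe_smul, pow_succ]
      push_cast
      module
    rw [hM, smul_mul_assoc, trace_smul, Matrix.sub_mul, trace_sub, ht, Complex.smul_re]
    simp
    ring
end

section
/- Let L₀ and L₁ be real vector spaces equipped with: bilinear maps [·,·] : L₀ × L₁ → L₁ and [·,·] : L₁ × L₁ → L₀ with [x,y] = [y,x] for x,y ∈ L₁; linear maps d : L₀ → L₁ and d : L₁ → L₀; a symmetric bilinear form ω on L₀ and an antisymmetric bilinear form ω on L₁; such that ω([a,x],h) = ω(a,[x,h]) and ω(dh,a) = ω(h,da) for all a ∈ L₀ and x,h ∈ L₁. Define φ : L₁ → L₀* by φ(x)(a) = ω(dx + ½[x,x], a), and for a ∈ L₀ define the vector field ξ_a on L₁ by ξ_a(x) = [a,x] − da. Then φ is a moment map for this action: for all a ∈ L₀ and x, h ∈ L₁, the derivative at t = 0 of t ↦ φ(x + t·h)(a) equals ω(ξ_a(x), h) = ω([a,x] − da, h). -/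
/-- The moment-map property for a cyclic DGLA `(L₀ ⊕ L₁, d, [·,·], ω)`.  With brackets
`[·,·] : L₀ × L₁ → L₁` and `[·,·] : L₁ × L₁ → L₀` (symmetric on odd elements), differentials
`d : L₀ → L₁` and `d : L₁ → L₀`, and bilinear forms `ω₀` on `L₀` (symmetric) and `ω₁` on `L₁`
(antisymmetric) satisfying `ω([a,x],h) = ω(a,[x,h])` and `ω(dh,a) = ω(h,da)`, the map
`φ(x)(a) = ω(dx + ½[x,x], a)` is a moment map for the vector fields `ξ_a(x) = [a,x] - da`:
the derivative at `t = 0` of `t ↦ φ(x + t h)(a)` equals `ω(ξ_a(x), h)`. -/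
theorem moment_map_cyclic_DGLA {L₀ L₁ : Type*}
    [AddCommGroup L₀] [Module ℝ L₀] [AddCommGroup L₁] [Module ℝ L₁]
    (b₀₁ : L₀ →ₗ[ℝ] L₁ →ₗ[ℝ] L₁) (b₁₁ : L₁ →ₗ[ℝ] L₁ →ₗ[ℝ] L₀)
    (d₀ : L₀ →ₗ[ℝ] L₁) (d₁ : L₁ →ₗ[ℝ] L₀)
    (ω₀ : L₀ →ₗ[ℝ] L₀ →ₗ[ℝ] ℝ) (ω₁ : L₁ →ₗ[ℝ] L₁ →ₗ[ℝ] ℝ)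
    (hb₁₁symm : ∀ x y : L₁, b₁₁ x y = b₁₁ y x)
    (hω₀symm : ∀ a b : L₀, ω₀ a b = ω₀ b a)
    (hω₁anti : ∀ x y : L₁, ω₁ x y = -ω₁ y x)
    (hinv : ∀ (a : L₀) (x h : L₁), ω₁ (b₀₁ a x) h = ω₀ a (b₁₁ x h))
    (hd : ∀ (h : L₁) (a : L₀), ω₀ (d₁ h) a = ω₁ h (d₀ a)) :
    ∀ (a : L₀) (x h : L₁),
      HasDerivAt
        (fun t : ℝ =>
          ω₀ (d₁ (x + t • h) + (1 / 2 : ℝ) • b₁₁ (x + t • h) (x + t • h)) a)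
        (ω₁ (b₀₁ a x - d₀ a) h) 0 := by
  intro a x h
  -- Along the line `x + t h` the function is a quadratic polynomial in `t`; its linear coefficient
  -- `ω₀ (d₁ h) a + ω₀ [x,h] a` (by symmetry of the odd bracket) is the derivative at `0`.
  have hpoly : (fun t : ℝ =>
      ω₀ (d₁ (x + t • h) + (1 / 2 : ℝ) • b₁₁ (x + t • h) (x + t • h)) a) =
      fun t : ℝ => (ω₀ (d₁ x) a + 1 / 2 * ω₀ (b₁₁ x x) a) +
        t * (ω₀ (d₁ h) a + ω₀ (b₁₁ x h) a) + t ^ 2 * (1 / 2 * ω₀ (b₁₁ h h) a) := by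
    funext t
    simp only [map_add, map_smul, LinearMap.add_apply, LinearMap.smul_apply, smul_eq_mul,
      hb₁₁symm h x]
    ring
  have hval : ω₁ (b₀₁ a x - d₀ a) h = ω₀ (d₁ h) a + ω₀ (b₁₁ x h) a := by
    rw [map_sub, LinearMap.sub_apply, hinv, hω₁anti (d₀ a) h, hd, hω₀symm a]
    ring
  rw [hpoly, hval]
  have hder := (((hasDerivAt_id (0 : ℝ)).mul_const (ω₀ (d₁ h) a + ω₀ (b₁₁ x h) a)).const_add
    (ω₀ (d₁ x) a + 1 / 2 * ω₀ (b₁₁ x x) a)).add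
    (((hasDerivAt_id (0 : ℝ)).pow 2).mul_const (1 / 2 * ω₀ (b₁₁ h h) a))
  exact hder.congr_deriv (by simp)
end
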